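/- arXiv:2605.17972 — 2 statements merged into one kernel-verified Lean document; each statement's English description precedes it below -/
import Mathlib

section
/- Let K be a number field with ring of integers O_K, and let L be a finitely generated projective O_K-module of constant rank two. Set SL(L) := {g ∈ Aut_{O_K}(L) : det(g) = 1}, and for a non-zero ideal 𝔞 ⊆ O_K let 𝒢(𝔞) := {g ∈ SL(L) : (g − id)(L) ⊆ 𝔞L}. Then for any two non-zero ideals 𝔞, 𝔟 ⊆ O_K, the setwise product satisfies 𝒢(𝔞)·𝒢(𝔟) = 𝒢(𝔞 + 𝔟). -/
set_option synthInstance.maxHeartbeats 400000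
set_option maxHeartbeats 1000000

noncomputable section

open scoped Pointwise

namespace Paper

variable (K : Type*) [Field K] [NumberField K]
variable (L : Type*) [AddCommGroup L] [Module (NumberField.RingOfIntegers K) L]

/-- Determinant-one automorphisms of `L` congruent to the identity modulo `𝔞`,
i.e. the principal congruence subgroup `𝒢(𝔞) ⊆ SL(L)` (as a set): the determinant
of `g` is computed as the determinant of the base change of `g` to `K`. -/
def congSet (𝔞 : Ideal (NumberField.RingOfIntegers K)) :
    Set (L ≃ₗ[NumberField.RingOfIntegers K] L) :=
  {g | LinearMap.det
        (LinearMap.baseChange K (g : L →ₗ[NumberField.RingOfIntegers K] L)) = 1 ∧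
      ∀ x : L, g x - x ∈ 𝔞 • (⊤ : Submodule (NumberField.RingOfIntegers K) L)}

end Paper

open Paper

/-!
Let `g ∈ 𝒢(𝔞 + 𝔟)`. An `h ∈ SL(L)` with `h ≡ 1` modulo `𝔞` and `h ≡ g` modulo `𝔟` gives
`g = h · h⁻¹g` with `h ∈ 𝒢(𝔞)` and `h⁻¹g ∈ 𝒢(𝔟)`. Such an `h` only has to be prescribed modulo
`𝔠 = 𝔞 ∩ 𝔟`. The ring `R/𝔠` is semilocal, so `L/𝔠L` is free; lift an isomorphism with `(R/𝔠)ⁿ` to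
maps between `L` and `Rⁿ`. Since `1 ≡ g` modulo `𝔞 + 𝔟`, the two congruences, read on `Rⁿ`, have a
common solution in `End(Rⁿ)`. Its determinant is `1` modulo `𝔞` and modulo `𝔟`, hence modulo `𝔠`.

It remains to lift from `SL(L/𝔠L)` to `SL(L)`. Since `R/𝔠` has stable range one, `SLₙ(R/𝔠)` is
generated by elementary matrices. Each of these is a transvection `x ↦ x + φ(x)v` with `φ(v) = 0`,
and it lifts to a transvection of `L` once `φ` and `v` are lifted so that still `φ(v) = 0`.
-/

open Matrix TensorProduct

section SemilocalGeneration

variable {S : Type*} [CommRing S]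

theorem exists_isUnit_add_mul_of_isCoprime [Finite (MaximalSpectrum S)] {a b : S}
    (h : IsCoprime a b) : ∃ t, IsUnit (a + t * b) := by
  classical
  have pairwise_coprime :
      Pairwise (Function.onFun IsCoprime fun m : MaximalSpectrum S ↦ m.asIdeal) :=
    fun _ _ hne ↦ Ideal.isCoprime_of_isMaximal (MaximalSpectrum.ext_iff.ne.mp hne)
  obtain ⟨t, ht⟩ := Ideal.exists_forall_sub_mem_ideal pairwise_coprime
    fun m ↦ if a ∈ m.asIdeal then (1 : S) else 0
  refine ⟨t, by_contra fun nonunit ↦ ?_⟩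
  obtain ⟨m, hm, mem⟩ := exists_max_ideal_of_mem_nonunits nonunit
  have ht : t - (if a ∈ m then 1 else 0) ∈ m := ht ⟨m, hm⟩
  split_ifs at ht with ha
  · have hb : b ∈ m := by
      rw [show b = a + t * b - a - (t - 1) * b by ring]
      exact m.sub_mem (m.sub_mem mem ha) (m.mul_mem_right b ht)
    obtain ⟨x, y, hxy⟩ := h
    exact hm.ne_top <| m.eq_top_iff_one.mpr <|
      hxy ▸ m.add_mem (m.mul_mem_left x ha) (m.mul_mem_left y hb)
  · rw [sub_zero] at ht
    exact ha ((m.add_mem_iff_left (m.mul_mem_right b ht)).mp mem)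

/-- The elementary matrices `1 + v fᵀ` with `v` and `f` disjointly supported, together with all
their products. Disjoint supports keep row and column operations in a single generator, and survive
entrywise lifting along a surjection of rings. -/
def elementaryMonoid (n : ℕ) (S : Type*) [CommRing S] : Submonoid (Matrix (Fin n) (Fin n) S) :=
  Submonoid.closure {T | ∃ v f : Fin n → S, (∀ k, v k = 0 ∨ f k = 0) ∧ T = 1 + vecMulVec v f}

variable {n : ℕ}

theorem dotProduct_eq_zero_of_disjoint {v f : Fin n → S} (h : ∀ k, v k = 0 ∨ f k = 0) :
    f ⬝ᵥ v = 0 :=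
  Finset.sum_eq_zero fun k _ ↦ mul_eq_zero_of_ne_zero_imp_eq_zero fun hf ↦ (h k).resolve_right hf

theorem one_add_vecMulVec_mem_elementaryMonoid {v f : Fin n → S} (h : ∀ k, v k = 0 ∨ f k = 0) :
    1 + vecMulVec v f ∈ elementaryMonoid n S :=
  Submonoid.subset_closure ⟨v, f, h, rfl⟩

theorem det_one_add_vecMulVec {v f : Fin n → S} (h : f ⬝ᵥ v = 0) :
    (1 + vecMulVec v f).det = 1 := by
  rw [vecMulVec_eq Unit, det_one_add_replicateCol_mul_replicateRow, h, add_zero]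

theorem one_add_vecMulVec_neg_mul {v f : Fin n → S} (h : f ⬝ᵥ v = 0) :
    (1 + vecMulVec (-v) f) * (1 + vecMulVec v f) = 1 := by
  simp [mul_add, add_mul, vecMulVec_mul_vecMulVec, h, neg_vecMulVec]

theorem mul_mem_elementaryMonoid_iff_right {T A : Matrix (Fin n) (Fin n) S}
    (hT : T ∈ elementaryMonoid n S) : T * A ∈ elementaryMonoid n S ↔ A ∈ elementaryMonoid n S := by
  refine ⟨fun hTA ↦ ?_, mul_mem hT⟩
  induction hT using Submonoid.closure_induction generalizing A with
  | mem _ hT =>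
    obtain ⟨v, f, h, rfl⟩ := hT
    rw [← one_mul A, ← one_add_vecMulVec_neg_mul (dotProduct_eq_zero_of_disjoint h), mul_assoc]
    exact mul_mem (one_add_vecMulVec_mem_elementaryMonoid fun k ↦ by simpa using h k) hTA
  | one => rwa [one_mul] at hTA
  | mul _ _ _ _ ih₁ ih₂ => exact ih₂ (ih₁ (by rwa [← mul_assoc]))

/-- The block matrix `diag(1, A)`, as a monoid homomorphism in `A`. -/
def oneBorder (n : ℕ) (S : Type*) [CommRing S] :
    Matrix (Fin n) (Fin n) S →* Matrix (Fin (n + 1)) (Fin (n + 1)) S where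
  toFun A := of (Fin.cons (Fin.cons 1 0) fun i ↦ Fin.cons 0 (A i))
  map_one' := by
    ext i j
    cases i using Fin.cases <;> cases j using Fin.cases <;>
      simp [one_apply, Fin.succ_ne_zero, (Fin.succ_ne_zero _).symm]
  map_mul' A B := by
    ext i j
    cases i using Fin.cases <;> cases j using Fin.cases <;> simp [mul_apply, Fin.sum_univ_succ]

theorem elementaryMonoid_le_comap_oneBorder :
    elementaryMonoid n S ≤ (elementaryMonoid (n + 1) S).comap (oneBorder n S) := by
  refine Submonoid.closure_le.mpr ?_
  rintro _ ⟨v, f, h, rfl⟩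
  have border_eq : oneBorder n S (1 + vecMulVec v f) =
      1 + vecMulVec (Fin.cons 0 v : Fin (n + 1) → S) (Fin.cons 0 f) := by
    ext i j
    cases i using Fin.cases <;> cases j using Fin.cases <;>
      simp [oneBorder, one_apply, vecMulVec_apply, (Fin.succ_ne_zero _).symm]
  rw [SetLike.mem_coe, Submonoid.mem_comap, border_eq]
  exact one_add_vecMulVec_mem_elementaryMonoid (Fin.cases (.inl rfl) h)

theorem det_oneBorder (A : Matrix (Fin n) (Fin n) S) : (oneBorder n S A).det = A.det := by
  have submatrix_eq : (oneBorder n S A).submatrix Fin.succ (Fin.succAbove 0) = A := rfl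
  rw [det_succ_row_zero, Fin.sum_univ_succ, submatrix_eq]
  simp [oneBorder]

theorem one_add_vecMulVec_mulVec (v f x : Fin n → S) :
    (1 + vecMulVec v f) *ᵥ x = x + (f ⬝ᵥ x) • v := by
  simp [add_mulVec, vecMulVec_mulVec]

theorem exists_mem_elementaryMonoid_mulVec_eq_single [Finite (MaximalSpectrum S)]
    {x y : Fin (n + 2) → S} (h : y ⬝ᵥ x = 1) :
    ∃ T ∈ elementaryMonoid (n + 2) S, T *ᵥ x = Pi.single 0 1 := by
  obtain ⟨T₁, mem₁, unit₁⟩ : ∃ T ∈ elementaryMonoid (n + 2) S, IsUnit ((T *ᵥ x) 1) := by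
    let f := Function.update y 1 0
    have coprime : IsCoprime (x 1) (f ⬝ᵥ x) := by
      refine ⟨y 1, 1, ?_⟩
      rw [one_mul, ← h, dotProduct, dotProduct, Fintype.sum_eq_add_sum_compl 1 (fun k ↦ y k * x k),
        Fintype.sum_eq_add_sum_compl 1]
      simp +contextual [f, Finset.sum_congr, Function.update_of_ne]
    obtain ⟨t, ht⟩ := exists_isUnit_add_mul_of_isCoprime coprime
    refine ⟨1 + vecMulVec (Pi.single 1 t) f, one_add_vecMulVec_mem_elementaryMonoid fun k ↦ ?_, ?_⟩
    · by_cases hk : k = 1 <;> simp [f, hk]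
    · simpa [one_add_vecMulVec_mulVec, mul_comm] using ht
  obtain ⟨T₂, mem₂, eq_one⟩ :
      ∃ T ∈ elementaryMonoid (n + 2) S, (T *ᵥ (T₁ *ᵥ x)) 0 = 1 := by
    obtain ⟨u, hu⟩ := unit₁.exists_left_inv
    generalize T₁ *ᵥ x = z at hu
    refine ⟨1 + vecMulVec (Pi.single 0 ((1 - z 0) * u)) (Pi.single 1 1),
      one_add_vecMulVec_mem_elementaryMonoid fun k ↦ ?_, ?_⟩
    · by_cases hk : k = 1 <;> simp [hk]
    · rw [one_add_vecMulVec_mulVec, single_one_dotProduct, Pi.add_apply, Pi.smul_apply,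
        Pi.single_eq_same, smul_eq_mul]
      linear_combination (1 - z 0) * hu
  generalize hz : T₂ *ᵥ (T₁ *ᵥ x) = z at eq_one
  refine ⟨(1 + vecMulVec (Function.update (-z) 0 0) (Pi.single 0 1)) * (T₂ * T₁),
    mul_mem (one_add_vecMulVec_mem_elementaryMonoid fun k ↦ ?_) (mul_mem mem₂ mem₁), ?_⟩
  · by_cases hk : k = 0 <;> simp [hk]
  · rw [← mulVec_mulVec, ← mulVec_mulVec, hz, one_add_vecMulVec_mulVec]
    ext k
    by_cases hk : k = 0 <;> simp [hk, eq_one]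

theorem det_eq_one_of_mem_elementaryMonoid {A : Matrix (Fin n) (Fin n) S}
    (hA : A ∈ elementaryMonoid n S) : A.det = 1 := by
  induction hA using Submonoid.closure_induction with
  | mem _ hT =>
    obtain ⟨v, f, h, rfl⟩ := hT
    exact det_one_add_vecMulVec (dotProduct_eq_zero_of_disjoint h)
  | one => exact det_one
  | mul _ _ _ _ hA hB => rw [det_mul, hA, hB, one_mul]

theorem exists_eq_oneBorder_mul {A : Matrix (Fin (n + 1)) (Fin (n + 1)) S}
    (hA : A.col 0 = Pi.single 0 1) :
    ∃ B, ∃ T ∈ elementaryMonoid (n + 1) S, A = oneBorder n S B * T := by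
  refine ⟨A.submatrix Fin.succ Fin.succ,
    1 + vecMulVec (Pi.single 0 1) (Fin.cons 0 (Fin.tail (A 0))),
    one_add_vecMulVec_mem_elementaryMonoid (Fin.cases (.inr rfl) fun k ↦ .inl (by simp)), ?_⟩
  have col_zero (i) : A i 0 = (Pi.single 0 1 : Fin (n + 1) → S) i := congrFun hA i
  rw [mul_add, mul_one, mul_vecMulVec]
  ext i j
  cases i using Fin.cases <;> cases j using Fin.cases <;>
    simp [oneBorder, vecMulVec_apply, col_zero, Fin.tail]

theorem mem_elementaryMonoid_of_det_eq_one [Finite (MaximalSpectrum S)]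
    {A : Matrix (Fin n) (Fin n) S} (hA : A.det = 1) : A ∈ elementaryMonoid n S := by
  induction n with
  | zero => exact Subsingleton.elim 1 A ▸ one_mem _
  | succ n ih =>
    obtain ⟨T, hT, hTA⟩ : ∃ T ∈ elementaryMonoid (n + 1) S, (T * A).col 0 = Pi.single 0 1 := by
      cases n with
      | zero =>
        refine ⟨1, one_mem _, funext fun i ↦ ?_⟩
        fin_cases i
        simpa using hA
      | succ n =>
        have unimodular : A.adjugate 0 ⬝ᵥ A.col 0 = 1 :=
          congr($(A.adjugate_mul) 0 0).trans (by simp [hA])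
        exact exists_mem_elementaryMonoid_mulVec_eq_single unimodular
    obtain ⟨B, T', hT', eq_mul⟩ := exists_eq_oneBorder_mul hTA
    have det_B : B.det = 1 := by
      simpa [det_oneBorder, det_eq_one_of_mem_elementaryMonoid hT,
        det_eq_one_of_mem_elementaryMonoid hT', hA] using congr(det $eq_mul).symm
    rw [← mul_mem_elementaryMonoid_iff_right hT, eq_mul]
    exact mul_mem (elementaryMonoid_le_comap_oneBorder (ih det_B)) hT'

end SemilocalGeneration

section Congruence

variable {R : Type*} [CommRing R] {𝔞 𝔟 𝔠 : Ideal R}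
  {M N P : Type*} [AddCommGroup M] [Module R M] [AddCommGroup N] [Module R N]
  [AddCommGroup P] [Module R P]

/-- Congruence of two linear maps modulo an ideal `𝔠`: their values agree modulo `𝔠N`. -/
def CongrMod (𝔠 : Ideal R) (f g : M →ₗ[R] N) : Prop :=
  ∀ x, f x ≡ g x [SMOD 𝔠 • (⊤ : Submodule R N)]

namespace CongrMod

theorem refl (f : M →ₗ[R] N) : CongrMod 𝔠 f f := fun _ ↦ SModEq.rfl

variable {f g h : M →ₗ[R] N}

theorem symm (hfg : CongrMod 𝔠 f g) : CongrMod 𝔠 g f := fun x ↦ (hfg x).symm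

theorem trans (hfg : CongrMod 𝔠 f g) (hgh : CongrMod 𝔠 g h) : CongrMod 𝔠 f h :=
  fun x ↦ (hfg x).trans (hgh x)

theorem mono (hle : 𝔞 ≤ 𝔟) (hfg : CongrMod 𝔞 f g) : CongrMod 𝔟 f g :=
  fun x ↦ (hfg x).mono (Submodule.smul_mono_left hle)

theorem comp {f' g' : N →ₗ[R] P} (hfg' : CongrMod 𝔠 f' g') (hfg : CongrMod 𝔠 f g) :
    CongrMod 𝔠 (f' ∘ₗ f) (g' ∘ₗ g) :=
  fun x ↦ (((hfg x).map f').mono (Submodule.map_le_iff_le_comap.mpr <|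
    Submodule.smul_top_le_comap_smul_top 𝔠 f')).trans (hfg' (g x))

theorem of_basis {ι : Type*} (b : Module.Basis ι R M)
    (h : ∀ j, f (b j) ≡ g (b j) [SMOD 𝔠 • (⊤ : Submodule R N)]) : CongrMod 𝔠 f g :=
  fun x ↦ DFunLike.congr_fun (b.ext h : (𝔠 • ⊤ : Submodule R N).mkQ ∘ₗ f = Submodule.mkQ _ ∘ₗ g) x

theorem exists_congrMod_of_sup [Module.Projective R M] (hfg : CongrMod (𝔞 ⊔ 𝔟) f g) :
    ∃ h : M →ₗ[R] N, CongrMod 𝔞 h f ∧ CongrMod 𝔟 h g := by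
  let sum := (𝔞 • ⊤ : Submodule R N).subtype.coprod (𝔟 • ⊤ : Submodule R N).subtype
  have sub_mem (x) : (f - g) x ∈ LinearMap.range sum := by
    rw [← Submodule.sup_eq_range, ← Submodule.sup_smul]
    exact SModEq.sub_mem.mp (hfg x)
  obtain ⟨k, hk⟩ := Module.projective_lifting_property sum.rangeRestrict
    ((f - g).codRestrict _ sub_mem) sum.surjective_rangeRestrict
  have sum_eq (x) : ((k x).1 : N) + (k x).2 = f x - g x := congrArg Subtype.val congr($hk x)
  refine ⟨f - Submodule.subtype _ ∘ₗ LinearMap.fst _ _ _ ∘ₗ k, fun x ↦ ?_, fun x ↦ ?_⟩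
  · rw [SModEq.sub_mem]
    simp
  · rw [SModEq.sub_mem]
    convert (k x).2.2 using 1
    simp only [LinearMap.sub_apply, LinearMap.comp_apply, LinearMap.fst_apply,
      Submodule.subtype_apply]
    rw [sub_right_comm, ← sum_eq, add_sub_cancel_left]

end CongrMod

theorem mem_ideal_smul_top_pi_iff {n : ℕ} {x : Fin n → R} :
    x ∈ 𝔠 • (⊤ : Submodule R (Fin n → R)) ↔ ∀ k, x k ∈ 𝔠 := by
  refine ⟨fun hx k ↦ ?_, fun hx ↦ ?_⟩
  · simpa using Submodule.smul_top_le_comap_smul_top 𝔠 (LinearMap.proj k) hx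
  · rw [pi_eq_sum_univ x]
    exact Submodule.sum_mem _ fun k _ ↦ Submodule.smul_mem_smul (hx k) trivial

variable {n : ℕ} {f g : (Fin n → R) →ₗ[R] Fin n → R}

theorem congrMod_iff_map_toMatrix'_eq :
    CongrMod 𝔠 f g ↔
      f.toMatrix'.map (Ideal.Quotient.mk 𝔠) = g.toMatrix'.map (Ideal.Quotient.mk 𝔠) := by
  simp only [← Matrix.ext_iff, map_apply, LinearMap.toMatrix'_apply,
    Ideal.Quotient.mk_eq_mk_iff_sub_mem]
  refine ⟨fun h i j ↦ mem_ideal_smul_top_pi_iff.mp (SModEq.sub_mem.mp (h _)) i, fun h ↦ ?_⟩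
  refine .of_basis (Pi.basisFun R (Fin n)) fun j ↦ ?_
  rw [SModEq.sub_mem, Pi.basisFun_apply, mem_ideal_smul_top_pi_iff]
  exact fun i ↦ h i j

theorem CongrMod.det_sub_det_mem (h : CongrMod 𝔠 f g) : f.det - g.det ∈ 𝔠 := by
  rw [← LinearMap.det_toMatrix', ← LinearMap.det_toMatrix', ← Ideal.Quotient.mk_eq_mk_iff_sub_mem,
    RingHom.map_det, RingHom.map_det]
  exact congrArg Matrix.det (congrMod_iff_map_toMatrix'_eq.mp h)

theorem map_mapMatrix_elementaryMonoid {S : Type*} [CommRing S] {φ : R →+* S}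
    (hφ : Function.Surjective φ) :
    (elementaryMonoid n R).map φ.mapMatrix = elementaryMonoid n S := by
  have map_generator (v f : Fin n → R) : φ.mapMatrix (1 + vecMulVec v f) =
      1 + vecMulVec (φ ∘ v) (φ ∘ f) := by
    ext i j
    simp [vecMulVec_apply, one_apply, apply_ite φ]
  rw [elementaryMonoid, elementaryMonoid, MonoidHom.map_mclosure]
  congr 1
  ext T
  constructor
  · rintro ⟨_, ⟨v, f, h, rfl⟩, rfl⟩
    exact ⟨φ ∘ v, φ ∘ f, fun k ↦ (h k).imp (by simp +contextual) (by simp +contextual),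
      map_generator v f⟩
  · rintro ⟨v, f, h, rfl⟩
    obtain ⟨σ, σ_zero, hσ⟩ : ∃ σ : S → R, σ 0 = 0 ∧ ∀ s, φ (σ s) = s := by
      classical
      refine ⟨Function.update (Function.surjInv hφ) 0 0, by simp, fun s ↦ ?_⟩
      by_cases hs : s = 0 <;> simp [hs, Function.surjInv_eq]
    refine ⟨_, ⟨σ ∘ v, σ ∘ f, fun k ↦ (h k).imp ?_ ?_, rfl⟩, ?_⟩
    · simp +contextual [σ_zero]
    · simp +contextual [σ_zero]
    · simp [map_generator, Function.comp_def, hσ]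

theorem exists_mem_elementaryMonoid_congrMod [Finite (MaximalSpectrum (R ⧸ 𝔠))]
    (hf : f.det - 1 ∈ 𝔠) : ∃ E ∈ elementaryMonoid n R, CongrMod 𝔠 E.toLin' f := by
  have det_map : (f.toMatrix'.map (Ideal.Quotient.mk 𝔠)).det = 1 := by
    rw [← RingHom.mapMatrix_apply, ← RingHom.map_det, LinearMap.det_toMatrix',
      ← map_one (Ideal.Quotient.mk 𝔠)]
    exact (Ideal.Quotient.mk_eq_mk_iff_sub_mem _ _).mpr hf
  have mem := mem_elementaryMonoid_of_det_eq_one det_map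
  rw [← map_mapMatrix_elementaryMonoid Ideal.Quotient.mk_surjective] at mem
  obtain ⟨E, hE, eq⟩ := mem
  exact ⟨E, hE, congrMod_iff_map_toMatrix'_eq.mpr (by simpa using eq)⟩

end Congruence

section Frame

variable {R : Type*} [CommRing R] {L : Type*} [AddCommGroup L] [Module R L]

/-- A frame of rank `n` of `L` modulo `𝔠`: maps between `Rⁿ` and `L` that are mutually inverse
modulo `𝔠`, normalised so that one of the composites is exactly a scalar. Because of this, a pair
`v`, `f` with `f ⬝ᵥ v = 0` yields a vector and a linear form on `L` that are exactly orthogonal,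
not only modulo `𝔠`. -/
structure FrameMod (𝔠 : Ideal R) (n : ℕ) (L : Type*) [AddCommGroup L] [Module R L] where
  lift : (Fin n → R) →ₗ[R] L
  coord : L →ₗ[R] Fin n → R
  scale : R
  coord_comp_lift : coord ∘ₗ lift = scale • LinearMap.id
  congrMod_coord_comp_lift : CongrMod 𝔠 (coord ∘ₗ lift) LinearMap.id
  congrMod_lift_comp_coord : CongrMod 𝔠 (lift ∘ₗ coord) LinearMap.id

variable {𝔠 : Ideal R} {n : ℕ}

theorem congrMod_toLin'_adjugate {f : (Fin n → R) →ₗ[R] Fin n → R}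
    (hf : CongrMod 𝔠 f LinearMap.id) :
    CongrMod 𝔠 f.toMatrix'.adjugate.toLin' LinearMap.id := by
  rw [congrMod_iff_map_toMatrix'_eq] at hf ⊢
  rw [LinearMap.toMatrix'_toLin', ← RingHom.mapMatrix_apply, RingHom.map_adjugate,
    RingHom.mapMatrix_apply, hf]
  simp

theorem toLin'_adjugate_comp_self (f : (Fin n → R) →ₗ[R] Fin n → R) :
    f.toMatrix'.adjugate.toLin' ∘ₗ f = f.det • LinearMap.id := by
  calc f.toMatrix'.adjugate.toLin' ∘ₗ f
    _ = (f.toMatrix'.adjugate * f.toMatrix').toLin' := by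
      rw [Matrix.toLin'_mul, Matrix.toLin'_toMatrix']
    _ = f.det • LinearMap.id := by
      rw [adjugate_mul, map_smul, Matrix.toLin'_one, LinearMap.det_toMatrix']

theorem nonempty_frameMod_of_congrMod {i : (Fin n → R) →ₗ[R] L} {p : L →ₗ[R] Fin n → R}
    (hpi : CongrMod 𝔠 (p ∘ₗ i) LinearMap.id) (hip : CongrMod 𝔠 (i ∘ₗ p) LinearMap.id) :
    Nonempty (FrameMod 𝔠 n L) := by
  let adj := (p ∘ₗ i).toMatrix'.adjugate.toLin'
  have congr_adj : CongrMod 𝔠 adj LinearMap.id := congrMod_toLin'_adjugate hpi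
  exact ⟨{
    lift := i
    coord := adj ∘ₗ p
    scale := (p ∘ₗ i).det
    coord_comp_lift := by
      rw [LinearMap.comp_assoc, toLin'_adjugate_comp_self]
    congrMod_coord_comp_lift := congr_adj.comp hpi
    congrMod_lift_comp_coord := ((CongrMod.refl i).comp (congr_adj.comp (.refl p))).trans hip }⟩

theorem finrank_baseChange_field [IsDomain R] [Module.Finite R L] [Module.Flat R L]
    (k : Type*) [Field k] [Algebra R k] :
    Module.finrank k (k ⊗[R] L) = Module.finrank R L := by
  let p : PrimeSpectrum k := ⊥
  calc Module.finrank k (k ⊗[R] L)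
    _ = Module.rankAtStalk (R := k) (k ⊗[R] L) p := by
      rw [Module.rankAtStalk_eq_finrank_of_free]; simp
    _ = Module.rankAtStalk L (p.comap (algebraMap R k)) := Module.rankAtStalk_baseChange p
    _ = Module.finrank R L := by
      rw [← Ideal.finrank_fiber_eq_rankAtStalk, Ideal.finrank_fiber_eq_finrank]

theorem nonempty_basis_quotient_smul_top [IsDomain R] [Module.Finite R L] [Module.Flat R L]
    (𝔠 : Ideal R) [Finite (MaximalSpectrum (R ⧸ 𝔠))] :
    Nonempty (Module.Basis (Fin (Module.finrank R L)) (R ⧸ 𝔠) (L ⧸ 𝔠 • (⊤ : Submodule R L))) := by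
  have rank_eq (P : MaximalSpectrum (R ⧸ 𝔠)) : Module.finrank ((R ⧸ 𝔠) ⧸ P.asIdeal)
      (((R ⧸ 𝔠) ⧸ P.asIdeal) ⊗[R ⧸ 𝔠] ((R ⧸ 𝔠) ⊗[R] L)) = Module.finrank R L := by
    let _ := Ideal.Quotient.field P.asIdeal
    rw [(AlgebraTensorModule.cancelBaseChange R (R ⧸ 𝔠) ((R ⧸ 𝔠) ⧸ P.asIdeal)
      ((R ⧸ 𝔠) ⧸ P.asIdeal) L).finrank_eq]
    exact finrank_baseChange_field ((R ⧸ 𝔠) ⧸ P.asIdeal)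
  obtain ⟨b⟩ := Module.nonempty_basis_of_flat_of_finrank_eq (R ⧸ 𝔠) ((R ⧸ 𝔠) ⊗[R] L) _ rank_eq
  exact ⟨b.map ((quotTensorEquivQuotSMul L 𝔠).extendScalarsOfSurjective
    Ideal.Quotient.mk_surjective)⟩

theorem nonempty_frameMod_of_basis [Module.Projective R L]
    (b : Module.Basis (Fin n) (R ⧸ 𝔠) (L ⧸ 𝔠 • (⊤ : Submodule R L))) :
    Nonempty (FrameMod 𝔠 n L) := by
  choose e he using fun k ↦ Submodule.Quotient.mk_surjective _ (b k)
  let i := Fintype.linearCombination R e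
  let red : (Fin n → R) →ₗ[R] Fin n → R ⧸ 𝔠 := 𝔠.mkQ.compLeft (Fin n)
  have red_surjective : Function.Surjective red := Ideal.Quotient.mk_surjective.comp_left
  obtain ⟨p, hp⟩ := Module.projective_lifting_property red
    ((b.equivFun.restrictScalars R).toLinearMap ∘ₗ Submodule.mkQ _) red_surjective
  have mk_i (x : Fin n → R) : Submodule.Quotient.mk (i x) = b.equivFun.symm (red x) := by
    simp only [i, Fintype.linearCombination_apply, ← Submodule.mkQ_apply, map_sum, map_smul,
      b.equivFun_symm_apply]
    simp only [Submodule.mkQ_apply, he]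
    rfl
  have mk_p (x : L) : red (p x) = b.equivFun (Submodule.Quotient.mk x) := DFunLike.congr_fun hp x
  refine nonempty_frameMod_of_congrMod (i := i) (p := p) (fun x ↦ ?_) fun x ↦ ?_
  · rw [SModEq.sub_mem, mem_ideal_smul_top_pi_iff]
    intro k
    rw [Pi.sub_apply, ← Ideal.Quotient.mk_eq_mk_iff_sub_mem]
    have : red (p (i x)) = red x := by rw [mk_p, mk_i, LinearEquiv.apply_symm_apply]
    exact congrFun this k
  · exact (mk_i (p x)).trans (by rw [mk_p, LinearEquiv.symm_apply_apply]; rfl)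

theorem nonempty_frameMod [IsDomain R] [Module.Finite R L] [Module.Projective R L]
    (𝔠 : Ideal R) [Finite (MaximalSpectrum (R ⧸ 𝔠))] :
    Nonempty (FrameMod 𝔠 (Module.finrank R L) L) :=
  (nonempty_basis_quotient_smul_top 𝔠).elim nonempty_frameMod_of_basis

end Frame

section PrincipalCongruenceSubgroup

theorem det_comp_comp_of_det_eq_one {k V W : Type*} [Field k] [AddCommGroup V] [Module k V]
    [Module.Finite k V] [AddCommGroup W] [Module k W] [Module.Finite k W]
    (h : Module.finrank k V = Module.finrank k W) {g : V →ₗ[k] V} (hg : g.det = 1)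
    (i : W →ₗ[k] V) (p : V →ₗ[k] W) : (p ∘ₗ g ∘ₗ i).det = (p ∘ₗ i).det := by
  let e := LinearEquiv.ofFinrankEq V W h
  let e' := e.symm.toLinearMap
  calc (p ∘ₗ g ∘ₗ i).det
    _ = ((p ∘ₗ e') ∘ₗ (e.toLinearMap ∘ₗ g ∘ₗ e') ∘ₗ e.toLinearMap ∘ₗ i).det := by
      congr 1; ext; simp [e']
    _ = (p ∘ₗ e').det * (e.toLinearMap ∘ₗ i).det := by
      rw [LinearMap.det_comp, LinearMap.det_comp, LinearMap.det_conj, hg, one_mul]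
    _ = (p ∘ₗ i).det := by
      rw [← LinearMap.det_comp]; congr 1; ext; simp [e']

variable {R : Type*} [CommRing R] (K : Type*) [Field K] [Algebra R K]
  (L : Type*) [AddCommGroup L] [Module R L]

/-- `SL(L)`: the automorphisms of `L` whose base change to the field `K` has determinant one. -/
def specialLinearSubgroup : Subgroup (L ≃ₗ[R] L) :=
  ((LinearMap.det (M := K ⊗[R] L)).comp <|
    (Module.End.baseChangeHom R K L).toMonoidHom.comp
      LinearEquiv.automorphismGroup.toLinearMapMonoidHom).ker

/-- The principal congruence subgroup of level `𝔞` in `SL(L)`. -/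
def principalCongruenceSubgroup (𝔞 : Ideal R) : Subgroup (L ≃ₗ[R] L) where
  carrier := {g | g ∈ specialLinearSubgroup K L ∧ CongrMod 𝔞 (g : L →ₗ[R] L) LinearMap.id}
  one_mem' := ⟨one_mem _, .refl _⟩
  mul_mem' := fun ⟨mem_g, hg⟩ ⟨mem_h, hh⟩ ↦ ⟨mul_mem mem_g mem_h, hg.comp hh⟩
  inv_mem' := fun {g} ⟨mem_g, hg⟩ ↦ ⟨inv_mem mem_g, fun x ↦ by
    simpa using ((CongrMod.refl (g⁻¹ : L ≃ₗ[R] L).toLinearMap).comp hg x).symm⟩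

variable {K L}

theorem mem_specialLinearSubgroup_iff {g : L ≃ₗ[R] L} :
    g ∈ specialLinearSubgroup K L ↔ ((g : L →ₗ[R] L).baseChange K).det = 1 :=
  .rfl

theorem transvection_mem_specialLinearSubgroup {φ : Module.Dual R L} {v : L} (h : φ v = 0) :
    LinearEquiv.transvection h ∈ specialLinearSubgroup K L := by
  have baseChange_eq_zero : φ.baseChange K (1 ⊗ₜ[R] v) = 0 := by simp [h]
  rw [mem_specialLinearSubgroup_iff, ← LinearEquiv.coe_baseChange,
    LinearEquiv.transvection.baseChange h baseChange_eq_zero, ← LinearEquiv.coe_det,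
    LinearEquiv.transvection.det_eq_one, Units.val_one]

variable {𝔞 𝔟 𝔠 : Ideal R} {n : ℕ}

theorem principalCongruenceSubgroup_mono (h : 𝔞 ≤ 𝔟) :
    principalCongruenceSubgroup K L 𝔞 ≤ principalCongruenceSubgroup K L 𝔟 :=
  fun _ hg ↦ ⟨hg.1, hg.2.mono h⟩

theorem exists_mem_specialLinearSubgroup_congrMod_of_mem_elementaryMonoid (F : FrameMod 𝔠 n L)
    {E : Matrix (Fin n) (Fin n) R} (hE : E ∈ elementaryMonoid n R) :
    ∃ h : L ≃ₗ[R] L, h ∈ specialLinearSubgroup K L ∧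
      CongrMod 𝔠 (h : L →ₗ[R] L) (F.lift ∘ₗ E.toLin' ∘ₗ F.coord) := by
  induction hE using Submonoid.closure_induction with
  | mem _ hT =>
    obtain ⟨v, f, disjoint, rfl⟩ := hT
    let φ : Module.Dual R L := dotProductBilin R R f ∘ₗ F.coord
    have φ_lift : φ (F.lift v) = 0 := by
      have : F.coord (F.lift v) = F.scale • v := DFunLike.congr_fun F.coord_comp_lift v
      simp [φ, this, dotProduct_eq_zero_of_disjoint disjoint]
    refine ⟨LinearEquiv.transvection φ_lift, transvection_mem_specialLinearSubgroup φ_lift,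
      fun x ↦ ?_⟩
    rw [LinearMap.comp_apply, LinearMap.comp_apply, toLin'_apply, one_add_vecMulVec_mulVec,
      map_add, map_smul]
    exact (F.congrMod_lift_comp_coord x).symm.add (SModEq.refl (φ x • F.lift v))
  | one => exact ⟨1, one_mem _, by simpa using F.congrMod_lift_comp_coord.symm⟩
  | mul A B _ _ hA hB =>
    obtain ⟨g, mem_g, hg⟩ := hA
    obtain ⟨h, mem_h, hh⟩ := hB
    refine ⟨g * h, mul_mem mem_g mem_h, (hg.comp hh).trans ?_⟩
    have := (CongrMod.refl (F.lift ∘ₗ A.toLin')).comp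
      (F.congrMod_coord_comp_lift.comp (.refl (B.toLin' ∘ₗ F.coord)))
    simpa [toLin'_mul, LinearMap.comp_assoc] using this

theorem exists_mem_specialLinearSubgroup_congrMod [Finite (MaximalSpectrum (R ⧸ 𝔠))]
    (F : FrameMod 𝔠 n L) {f : (Fin n → R) →ₗ[R] Fin n → R} (hf : f.det - 1 ∈ 𝔠) :
    ∃ h : L ≃ₗ[R] L, h ∈ specialLinearSubgroup K L ∧
      CongrMod 𝔠 (h : L →ₗ[R] L) (F.lift ∘ₗ f ∘ₗ F.coord) := by
  obtain ⟨E, hE, congr_E⟩ := exists_mem_elementaryMonoid_congrMod hf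
  obtain ⟨h, mem_h, hh⟩ :=
    exists_mem_specialLinearSubgroup_congrMod_of_mem_elementaryMonoid (K := K) F hE
  exact ⟨h, mem_h, hh.trans ((CongrMod.refl _).comp (congr_E.comp (.refl _)))⟩

variable [FaithfulSMul R K] [Module.Finite R L]

theorem det_coord_comp_comp_lift [Module.Flat R L]
    (F : FrameMod 𝔠 (Module.finrank R L) L) {g : L ≃ₗ[R] L} (hg : g ∈ specialLinearSubgroup K L) :
    (F.coord ∘ₗ (g : L →ₗ[R] L) ∘ₗ F.lift).det = (F.coord ∘ₗ F.lift).det := by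
  have algebraMap_injective := FaithfulSMul.algebraMap_injective R K
  have := algebraMap_injective.isDomain (algebraMap R K)
  have finrank_eq : Module.finrank K (K ⊗[R] L) =
      Module.finrank K (K ⊗[R] (Fin (Module.finrank R L) → R)) := by
    rw [finrank_baseChange_field, finrank_baseChange_field, Module.finrank_fin_fun]
  apply algebraMap_injective
  rw [← LinearMap.det_baseChange, ← LinearMap.det_baseChange, LinearMap.baseChange_comp,
    LinearMap.baseChange_comp, LinearMap.baseChange_comp]
  exact det_comp_comp_of_det_eq_one finrank_eq hg _ _

theorem exists_mem_specialLinearSubgroup_congrMod_id_congrMod [Module.Projective R L]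
    [Finite (MaximalSpectrum (R ⧸ 𝔞 ⊓ 𝔟))] {g : L ≃ₗ[R] L}
    (hg : g ∈ principalCongruenceSubgroup K L (𝔞 ⊔ 𝔟)) :
    ∃ h : L ≃ₗ[R] L, h ∈ specialLinearSubgroup K L ∧
      CongrMod 𝔞 (h : L →ₗ[R] L) LinearMap.id ∧ CongrMod 𝔟 (h : L →ₗ[R] L) g := by
  obtain ⟨mem_g, hg⟩ := hg
  have := (FaithfulSMul.algebraMap_injective R K).isDomain (algebraMap R K)
  obtain ⟨F⟩ := nonempty_frameMod (L := L) (𝔞 ⊓ 𝔟)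
  let gF := F.coord ∘ₗ (g : L →ₗ[R] L) ∘ₗ F.lift
  obtain ⟨f, congr_id, congr_gF⟩ : ∃ f, CongrMod 𝔞 f LinearMap.id ∧ CongrMod 𝔟 f gF :=
    CongrMod.exists_congrMod_of_sup <|
      (F.congrMod_coord_comp_lift.mono (inf_le_left.trans le_sup_left)).symm.trans <|
        (CongrMod.refl F.coord).comp (hg.symm.comp (.refl F.lift))
  have det_f : f.det - 1 ∈ 𝔞 ⊓ 𝔟 := by
    refine ⟨by simpa using congr_id.det_sub_det_mem, ?_⟩
    have det_gF : gF.det - 1 ∈ 𝔟 := by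
      rw [det_coord_comp_comp_lift F mem_g]
      simpa using (F.congrMod_coord_comp_lift.mono inf_le_right).det_sub_det_mem
    simpa using add_mem congr_gF.det_sub_det_mem det_gF
  obtain ⟨h, mem_h, hh⟩ := exists_mem_specialLinearSubgroup_congrMod (K := K) F det_f
  have lift_congr {f f' : (Fin _ → R) →ₗ[R] Fin _ → R} {𝔡 : Ideal R} (hf : CongrMod 𝔡 f f') :
      CongrMod 𝔡 (F.lift ∘ₗ f ∘ₗ F.coord) (F.lift ∘ₗ f' ∘ₗ F.coord) :=
    (CongrMod.refl F.lift).comp (hf.comp (.refl F.coord))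
  have lift_gF_congr : CongrMod (𝔞 ⊓ 𝔟) (F.lift ∘ₗ gF ∘ₗ F.coord) g :=
    F.congrMod_lift_comp_coord.comp
      ((CongrMod.refl (g : L →ₗ[R] L)).comp F.congrMod_lift_comp_coord)
  exact ⟨h, mem_h,
    ((hh.mono inf_le_left).trans (lift_congr congr_id)).trans
      (F.congrMod_lift_comp_coord.mono inf_le_left),
    ((hh.mono inf_le_right).trans (lift_congr congr_gF)).trans
      (lift_gF_congr.mono inf_le_right)⟩

end PrincipalCongruenceSubgroup

theorem congSet_eq_principalCongruenceSubgroup (K : Type*) [Field K] (L : Type*) [AddCommGroup L]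
    [Module (NumberField.RingOfIntegers K) L] (𝔞 : Ideal (NumberField.RingOfIntegers K)) :
    congSet K L 𝔞 = principalCongruenceSubgroup K L 𝔞 :=
  Set.ext fun _ ↦ and_congr_right fun _ ↦ forall_congr' fun _ ↦ SModEq.sub_mem.symm

theorem statement16_general {R : Type*} [CommRing R] (K : Type*) [Field K] [Algebra R K]
    [FaithfulSMul R K] (L : Type*) [AddCommGroup L] [Module R L] [Module.Finite R L]
    [Module.Projective R L] (𝔞 𝔟 : Ideal R) [Finite (MaximalSpectrum (R ⧸ 𝔞 ⊓ 𝔟))] :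
    (principalCongruenceSubgroup K L 𝔞 : Set (L ≃ₗ[R] L)) * principalCongruenceSubgroup K L 𝔟 =
      principalCongruenceSubgroup K L (𝔞 ⊔ 𝔟) := by
  refine subset_antisymm ?_ fun g hg ↦ ?_
  · rintro _ ⟨g, hg, h, hh, rfl⟩
    exact mul_mem (principalCongruenceSubgroup_mono le_sup_left hg)
      (principalCongruenceSubgroup_mono le_sup_right hh)
  · obtain ⟨h, mem_h, congr_id, congr_g⟩ :=
      exists_mem_specialLinearSubgroup_congrMod_id_congrMod hg
    refine ⟨h, ⟨mem_h, congr_id⟩, h⁻¹ * g, ⟨mul_mem (inv_mem mem_h) hg.1, fun x ↦ ?_⟩,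
      mul_inv_cancel_left h g⟩
    simpa using ((CongrMod.refl (h⁻¹ : L ≃ₗ[R] L).toLinearMap).comp congr_g x).symm

/-- Lemma `congruence-product-maximal-order`.
Let `L` be a finitely generated projective `𝓞_K`-module of constant rank two and
`𝒢(𝔞) = {g ∈ SL(L) : (g - id)(L) ⊆ 𝔞L}`.  Then for any two non-zero ideals
`𝔞, 𝔟 ⊆ 𝓞_K`, the setwise product satisfies `𝒢(𝔞)·𝒢(𝔟) = 𝒢(𝔞 + 𝔟)`. -/
theorem statement16 (K : Type*) [Field K] [NumberField K]
    (L : Type*) [AddCommGroup L] [Module (NumberField.RingOfIntegers K) L]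
    [Module.Finite (NumberField.RingOfIntegers K) L]
    [Module.Projective (NumberField.RingOfIntegers K) L]
    (hrank : Module.finrank (NumberField.RingOfIntegers K) L = 2)
    (𝔞 𝔟 : Ideal (NumberField.RingOfIntegers K)) (ha : 𝔞 ≠ ⊥) (hb : 𝔟 ≠ ⊥) :
    congSet K L 𝔞 * congSet K L 𝔟 = congSet K L (𝔞 + 𝔟) := by
  have : Finite (NumberField.RingOfIntegers K ⧸ 𝔞 ⊓ 𝔟) := Ideal.finiteQuotientOfFreeOfNeBot _ <|
    ne_bot_of_le_ne_bot (mul_ne_zero ha hb) Ideal.mul_le_inf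
  simpa only [congSet_eq_principalCongruenceSubgroup, Submodule.add_eq_sup] using
    statement16_general K L 𝔞 𝔟
end
end

section
/- Let K be a number field with ring of integers O_K, and let L be a finitely generated projective O_K-module of constant rank two. Set 𝒢 := SL(L) = {g ∈ Aut_{O_K}(L) : det(g) = 1}, acting on the set of one-dimensional K-subspaces (K-lines) ℓ ⊆ L ⊗_{O_K} K. Then the map sending a K-line ℓ to the ideal class of the rank-one projective O_K-module L ∩ ℓ induces a bijection between the set of 𝒢-orbits of K-lines and the ideal class group of O_K. In particular, the number of 𝒢-orbits equals the class number h_K of K. -/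
set_option synthInstance.maxHeartbeats 400000
set_option maxHeartbeats 1000000

open scoped TensorProduct

noncomputable section

/-!
For a line `ℓ` both `N = L ∩ ℓ` and `P = L / N` are invertible, and `L ≃ N × P`. An isomorphism
`N × P ≃ N' × P'` is a `2 × 2` matrix, and its determinant is an isomorphism `N ⊗ P ≃ N' ⊗ P'`;
hence `N ≃ N'` forces `P ≃ P'` by cancellation in the Picard group. So an isomorphism
`L ∩ ℓ ≃ L ∩ ℓ'` extends to an automorphism of `L`, whose determinant is a unit of the base ring
and is corrected to `1` by a scalar on `L / (L ∩ ℓ)`.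

Conversely, `N × P` maps onto every invertible module `I`: after a twist by the dual of `P` one may
assume `P = R` and `I` an ideal, and over a Dedekind domain an ideal is generated by any nonzero
subideal together with one more element. A section `I → L` of such a surjection `L → I` spans a
line `ℓ` with `L ∩ ℓ ≃ I`.
-/

section TensorDet

variable {R N P N' P' N'' P'' : Type*} [CommRing R]
  [AddCommGroup N] [AddCommGroup P] [AddCommGroup N'] [AddCommGroup P']
  [AddCommGroup N''] [AddCommGroup P'']
  [Module R N''] [Module R P''] [Module R N'] [Module R P'] [Module R N] [Module R P]

/-- The determinant of a `2 × 2` block map `N × P → N' × P'`, as the map `N ⊗ P → N' ⊗ P'` given by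
`φ₁₁ ⊗ φ₂₂ - φ₁₂ ⊗ φ₂₁` (with the factors of `N ⊗ P` swapped in the second term). For rank-one
modules it plays the role of the second exterior power of `φ`. -/
def tensorDet (φ : N × P →ₗ[R] N' × P') : N ⊗[R] P →ₗ[R] N' ⊗[R] P' :=
  TensorProduct.lift <|
    (TensorProduct.mk R N' P').compl₁₂ (.fst R N' P' ∘ₗ φ ∘ₗ .inl R N P)
      (.snd R N' P' ∘ₗ φ ∘ₗ .inr R N P) -
    ((TensorProduct.mk R N' P').compl₁₂ (.fst R N' P' ∘ₗ φ ∘ₗ .inr R N P)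
      (.snd R N' P' ∘ₗ φ ∘ₗ .inl R N P)).flip

lemma tensorDet_tmul (φ : N × P →ₗ[R] N' × P') (n : N) (p : P) :
    tensorDet φ (n ⊗ₜ p) =
      (φ (n, 0)).1 ⊗ₜ (φ (0, p)).2 - (φ (0, p)).1 ⊗ₜ (φ (n, 0)).2 := rfl

lemma tensorDet_id : tensorDet (.id : N × P →ₗ[R] N × P) = .id :=
  TensorProduct.ext' fun n p ↦ by simp [tensorDet_tmul]

lemma tensorDet_tmul_sub_tmul [Module.Invertible R N] [Module.Invertible R P]
    (φ : N × P →ₗ[R] N' × P') (x y : N × P) :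
    tensorDet φ (x.1 ⊗ₜ y.2 - y.1 ⊗ₜ x.2) = (φ x).1 ⊗ₜ (φ y).2 - (φ y).1 ⊗ₜ (φ x).2 := by
  obtain ⟨n, p⟩ := x
  obtain ⟨n', p'⟩ := y
  have split (n : N) (p : P) : φ (n, p) = φ (n, 0) + φ (0, p) := by simp [← map_add]
  -- In the tensor square of an invertible module `m ⊗ m' = m' ⊗ m`, so the diagonal terms cancel.
  have hN : (φ (n, 0)).1 ⊗ₜ[R] (φ (n', 0)).2 = (φ (n', 0)).1 ⊗ₜ[R] (φ (n, 0)).2 := by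
    simpa using congr(TensorProduct.map (.fst R N' P' ∘ₗ φ ∘ₗ .inl R N P)
      (.snd R N' P' ∘ₗ φ ∘ₗ .inl R N P)
      $(Module.Invertible.tmul_comm (R := R) (m₁ := n) (m₂ := n')))
  have hP : (φ (0, p)).1 ⊗ₜ[R] (φ (0, p')).2 = (φ (0, p')).1 ⊗ₜ[R] (φ (0, p)).2 := by
    simpa using congr(TensorProduct.map (.fst R N' P' ∘ₗ φ ∘ₗ .inr R N P)
      (.snd R N' P' ∘ₗ φ ∘ₗ .inr R N P)
      $(Module.Invertible.tmul_comm (R := R) (m₁ := p) (m₂ := p')))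
  simp only [split n p, split n' p', Prod.fst_add, Prod.snd_add, TensorProduct.add_tmul,
    TensorProduct.tmul_add, hN, hP, map_sub, tensorDet_tmul]
  abel

lemma tensorDet_comp [Module.Invertible R N'] [Module.Invertible R P']
    (ψ : N' × P' →ₗ[R] N'' × P'') (φ : N × P →ₗ[R] N' × P') :
    tensorDet (ψ ∘ₗ φ) = tensorDet ψ ∘ₗ tensorDet φ :=
  TensorProduct.ext' fun n p ↦ (tensorDet_tmul_sub_tmul ψ (φ (n, 0)) (φ (0, p))).symm

variable [Module.Invertible R N'] [Module.Invertible R P']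
  [Module.Invertible R N] [Module.Invertible R P]

/-- The determinant `tensorDet` of an isomorphism of sums of two invertible modules, as an
isomorphism. -/
def tensorDetEquiv (e : (N × P) ≃ₗ[R] N' × P') : N ⊗[R] P ≃ₗ[R] N' ⊗[R] P' :=
  .ofLinearMap (tensorDet e.toLinearMap) (tensorDet e.symm.toLinearMap)
    (by rw [← tensorDet_comp, e.comp_symm, tensorDet_id])
    (by rw [← tensorDet_comp, e.symm_comp, tensorDet_id])

theorem nonempty_linearEquiv_right_of_prod_of_left (e : (N × P) ≃ₗ[R] N' × P') (e₁ : N ≃ₗ[R] N') :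
    Nonempty (P ≃ₗ[R] P') := by
  have h : CommRing.Pic.mk R (N ⊗[R] P) = CommRing.Pic.mk R (N' ⊗[R] P') :=
    CommRing.Pic.mk_eq_mk_iff.mpr ⟨tensorDetEquiv e⟩
  rw [CommRing.Pic.mk_tensor, CommRing.Pic.mk_tensor, CommRing.Pic.mk_eq_mk_iff.mpr ⟨e₁⟩,
    mul_right_inj] at h
  exact CommRing.Pic.mk_eq_mk_iff.mp h

end TensorDet

section Splitting

variable {R M N P : Type*} [CommRing R] [AddCommGroup M] [AddCommGroup N] [AddCommGroup P]
  [Module R M] [Module R N] [Module R P]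

lemma exists_linearEquiv_prod_of_exact [Module.Projective R P] {f : N →ₗ[R] M} {g : M →ₗ[R] P}
    (hfg : Function.Exact f g) (hf : Function.Injective f) (hg : Function.Surjective g) :
    ∃ e : M ≃ₗ[R] N × P, ∀ n, e (f n) = (n, 0) := by
  obtain ⟨s, hs⟩ := Module.projective_lifting_property g .id hg
  obtain ⟨e, hef, -⟩ := hfg.splitSurjectiveEquiv hf ⟨s, hs⟩
  exact ⟨e, fun n ↦ by simp [hef]⟩

lemma exists_linearEquiv_prod_quotient (N : Submodule R M) [Module.Projective R (M ⧸ N)] :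
    ∃ e : M ≃ₗ[R] N × (M ⧸ N), ∀ n : N, e n = (n, 0) :=
  exists_linearEquiv_prod_of_exact (LinearMap.exact_subtype_mkQ N) N.injective_subtype
    N.mkQ_surjective

end Splitting

section BaseChangeDet

variable {R M N : Type*} [CommRing R] [AddCommGroup M] [Module R M] [AddCommGroup N] [Module R N]

lemma det_baseChange_conj (A : Type*) [CommRing A] [Algebra R A] (e : M ≃ₗ[R] N)
    (f : M →ₗ[R] M) : ((e.conj f).baseChange A).det = (f.baseChange A).det := by
  rw [LinearEquiv.conj_apply, LinearMap.baseChange_comp, LinearMap.baseChange_comp]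
  exact LinearMap.det_conj (f.baseChange A) (e.baseChange R A M N)

variable (K : Type*) [Field K] [Algebra R K]

lemma det_baseChange_prodMap [Module.Finite R M] [Module.Finite R N]
    (f : M →ₗ[R] M) (g : N →ₗ[R] N) :
    ((f.prodMap g).baseChange K).det = (f.baseChange K).det * (g.baseChange K).det := by
  rw [← LinearMap.det_prodMap, ← LinearMap.det_conj _ (TensorProduct.prodRight R K K M N).symm]
  congr 1
  ext <;> simp [LinearEquiv.eq_symm_apply]

lemma exists_det_baseChange_eq_algebraMap_unit [Module.Finite R M] [Module.Projective R M]
    (g : M ≃ₗ[R] M) :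
    ∃ u : Rˣ, ((g : M →ₗ[R] M).baseChange K).det = algebraMap R K u := by
  obtain ⟨n, π, -, hπ, -, -⟩ := Module.Finite.exists_comp_eq_id_of_projective R M
  obtain ⟨e, -⟩ := exists_linearEquiv_prod_of_exact π.exact_subtype_ker_map
    π.ker.injective_subtype hπ
  have : Module.Finite R π.ker := .of_surjective (.fst R π.ker M ∘ₗ e.toLinearMap)
    (Prod.fst_surjective.comp e.surjective)
  -- Extending `g` by the identity to the free module `ker π × M` does not change its determinant.
  let h : (Fin n → R) ≃ₗ[R] (Fin n → R) :=
    e ≪≫ₗ (LinearEquiv.refl R π.ker).prodCongr g ≪≫ₗ e.symm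
  refine ⟨LinearEquiv.det h, ?_⟩
  rw [LinearEquiv.coe_det, ← LinearMap.det_baseChange]
  calc ((g : M →ₗ[R] M).baseChange K).det
      = (((LinearMap.id : π.ker →ₗ[R] π.ker).prodMap g.toLinearMap).baseChange K).det := by
        rw [det_baseChange_prodMap, LinearMap.baseChange_id, LinearMap.det_id, one_mul]
    _ = ((h : (Fin n → R) →ₗ[R] (Fin n → R)).baseChange K).det :=
        (det_baseChange_conj K e.symm _).symm

lemma det_baseChange_smul_id [Module.Invertible R M] (u : R) :
    ((u • (LinearMap.id : M →ₗ[R] M)).baseChange K).det = algebraMap R K u := by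
  rw [LinearMap.baseChange_smul, LinearMap.baseChange_id, ← algebraMap_smul K, LinearMap.det_smul,
    Module.Invertible.finrank_eq_one K (K ⊗[R] M), pow_one, LinearMap.det_id, mul_one]

end BaseChangeDet

section Extension

variable {R L : Type*} [CommRing R] [AddCommGroup L] [Module R L]

lemma exists_linearEquiv_map_eq {N N' : Submodule R L} [Module.Projective R (L ⧸ N)]
    [Module.Projective R (L ⧸ N')] (e₁ : N ≃ₗ[R] N') (e₂ : (L ⧸ N) ≃ₗ[R] L ⧸ N') :
    ∃ g : L ≃ₗ[R] L, N.map (g : L →ₗ[R] L) = N' := by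
  obtain ⟨e, he⟩ := exists_linearEquiv_prod_quotient N
  obtain ⟨e', he'⟩ := exists_linearEquiv_prod_quotient N'
  let g : L ≃ₗ[R] L := e ≪≫ₗ e₁.prodCongr e₂ ≪≫ₗ e'.symm
  have hg (n : N) : g n = e₁ n := by simp [g, he, ← he']
  refine ⟨g, le_antisymm ?_ fun n' hn' ↦ ?_⟩
  · rintro - ⟨n, hn, rfl⟩
    exact (hg ⟨n, hn⟩).symm ▸ (e₁ ⟨n, hn⟩).2
  · exact ⟨e₁.symm ⟨n', hn'⟩, (e₁.symm ⟨n', hn'⟩).2, by simp [hg]⟩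

variable (K : Type*) [Field K] [Algebra R K]

lemma exists_linearEquiv_fixing_det_baseChange_eq (N : Submodule R L) [Module.Finite R N]
    [Module.Invertible R (L ⧸ N)] (u : Rˣ) :
    ∃ d : L ≃ₗ[R] L, (∀ n ∈ N, d n = n) ∧
      ((d : L →ₗ[R] L).baseChange K).det = algebraMap R K u := by
  obtain ⟨e, he⟩ := exists_linearEquiv_prod_quotient N
  let s : (L ⧸ N) ≃ₗ[R] L ⧸ N := .smulOfUnit u
  have hs : (s : (L ⧸ N) →ₗ[R] L ⧸ N) = (u : R) • .id := rfl
  let d : L ≃ₗ[R] L := e ≪≫ₗ (LinearEquiv.refl R N).prodCongr s ≪≫ₗ e.symm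
  have hd : (d : L →ₗ[R] L) = e.symm.conj (LinearMap.prodMap .id s) := rfl
  refine ⟨d, fun n hn ↦ ?_, ?_⟩
  · have hen : e n = (⟨n, hn⟩, 0) := he ⟨n, hn⟩
    simp [d, hen, LinearEquiv.symm_apply_eq]
  · rw [hd, det_baseChange_conj, det_baseChange_prodMap, hs, det_baseChange_smul_id,
      LinearMap.baseChange_id, LinearMap.det_id, one_mul]

theorem exists_linearEquiv_det_baseChange_eq_one_and_map_eq {N N' : Submodule R L}
    [Module.Invertible R N] [Module.Invertible R N'] [Module.Invertible R (L ⧸ N)]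
    [Module.Invertible R (L ⧸ N')] (e₁ : N ≃ₗ[R] N') :
    ∃ g : L ≃ₗ[R] L,
      ((g : L →ₗ[R] L).baseChange K).det = 1 ∧ N.map (g : L →ₗ[R] L) = N' := by
  obtain ⟨e, -⟩ := exists_linearEquiv_prod_quotient N
  obtain ⟨e', -⟩ := exists_linearEquiv_prod_quotient N'
  obtain ⟨e₂⟩ := nonempty_linearEquiv_right_of_prod_of_left (e.symm ≪≫ₗ e') e₁
  obtain ⟨g, hg⟩ := exists_linearEquiv_map_eq e₁ e₂
  have : Module.Finite R L := .equiv e.symm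
  have : Module.Projective R L := .of_equiv e.symm
  obtain ⟨u, hu⟩ := exists_det_baseChange_eq_algebraMap_unit K g
  obtain ⟨d, hdN, hd⟩ := exists_linearEquiv_fixing_det_baseChange_eq K N u⁻¹
  have hNd : N.map (d : L →ₗ[R] L) = N := SetLike.coe_injective (Set.EqOn.image_eq_self hdN)
  refine ⟨d ≪≫ₗ g, ?_, ?_⟩
  · rw [LinearEquiv.coe_trans, LinearMap.baseChange_comp, LinearMap.det_comp, hu, hd,
      ← map_mul, Units.mul_inv, map_one]
  · rw [LinearEquiv.coe_trans, Submodule.map_comp, hNd, hg]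

end Extension

section Invertible

open scoped nonZeroDivisors

lemma nontrivial_of_invertible (R M : Type*) [CommRing R] [Nontrivial R] [AddCommGroup M]
    [Module R M] [Module.Invertible R M] : Nontrivial M := by
  by_contra! h
  exact zero_ne_one (α := R) <| FaithfulSMul.eq_of_smul_eq_smul (α := M)
    fun _ ↦ Subsingleton.elim _ _

variable {R M : Type*} [CommRing R] [IsDedekindDomain R] [AddCommGroup M] [Module R M]

lemma invertible_submodule_of_fg {K : Type*} [Field K] [Algebra R K] [IsFractionRing R K]
    {J : Submodule R K} (hJ : J.FG) (hJ₀ : J ≠ ⊥) : Module.Invertible R J := by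
  let I : FractionalIdeal R⁰ K := ⟨J, FractionalIdeal.isFractional_of_fg hJ⟩
  have hI : I ≠ 0 := fun h ↦ hJ₀ (by simpa [I] using congr((↑$h : Submodule R K)))
  exact inferInstanceAs (Module.Invertible R
    (FractionalIdeal.unitsMulEquivSubmodule (Units.mk0 I hI) : Submodule R K))

lemma invertible_of_finrank_eq_one [Module.Finite R M] [Module.IsTorsionFree R M]
    (h : Module.finrank R M = 1) : Module.Invertible R M := by
  let K := FractionRing R
  have hK : Module.finrank K (K ⊗[R] M) = 1 := by
    rw [(TensorProduct.isBaseChange R M K).finrank_eq, h]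
  obtain ⟨e⟩ := Module.nonempty_linearEquiv_of_finrank_eq_one hK
  let J : Submodule R K := Module.Flat.submoduleAlgebra e.symm
  let e' : J ≃ₗ[R] M := Module.Flat.submoduleAlgebraEquiv _
  have : Nontrivial M := Module.nontrivial_of_finrank_pos (R := R) (by omega)
  have : Module.Invertible R J := invertible_submodule_of_fg
    (Module.Finite.iff_fg.mp (.equiv e'.symm)) (Submodule.nontrivial_iff_ne_bot.mp e'.nontrivial)
  exact .congr e'

end Invertible

section InvertibleModuleClass

open scoped nonZeroDivisors

/-- The class of an invertible module in the ideal class group, through the identification of the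
class group of a domain with its Picard group. -/
def invertibleModuleClass (R M : Type*) [CommRing R] [IsDomain R] [AddCommGroup M] [Module R M]
    [Module.Invertible R M] : ClassGroup R :=
  (ClassGroup.equivPic R).symm (CommRing.Pic.mk R M)

variable {R M N : Type*} [CommRing R] [AddCommGroup M] [Module R M] [Module.Invertible R M]
  [AddCommGroup N] [Module R N] [Module.Invertible R N]

lemma invertibleModuleClass_eq_iff [IsDomain R] :
    invertibleModuleClass R M = invertibleModuleClass R N ↔ Nonempty (M ≃ₗ[R] N) :=
  (ClassGroup.equivPic R).symm.injective.eq_iff.trans CommRing.Pic.mk_eq_mk_iff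

lemma invertibleModuleClass_equivPic [IsDomain R] (c : ClassGroup R) :
    invertibleModuleClass R (ClassGroup.equivPic R c) = c := by
  rw [invertibleModuleClass, CommRing.Pic.mk_eq_self, MulEquiv.symm_apply_apply]

lemma equivPic_mk0 [IsDedekindDomain R] (I : (Ideal R)⁰) [Module.Invertible R (I : Ideal R)] :
    ClassGroup.equivPic R (ClassGroup.mk0 I) = CommRing.Pic.mk R (I : Ideal R) := by
  rw [ClassGroup.mk0_eq_quotientMk]
  let J : (Submodule R (FractionRing R))ˣ :=
    FractionalIdeal.unitsMulEquivSubmodule (FractionalIdeal.mk0 (FractionRing R) I)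
  have e : (I : Ideal R) ≃ₗ[R] (J : Submodule R (FractionRing R)) :=
    Submodule.equivMapOfInjective (Algebra.linearMap R (FractionRing R))
      (FaithfulSMul.algebraMap_injective R _) (I : Ideal R)
  exact CommRing.Pic.mk_eq_mk_iff.mpr ⟨e.symm⟩

lemma invertibleModuleClass_eq_mk0 [IsDedekindDomain R] {I : Ideal R} (hI : I ∈ (Ideal R)⁰)
    (e : M ≃ₗ[R] I) : invertibleModuleClass R M = ClassGroup.mk0 ⟨I, hI⟩ := by
  have : Module.Invertible R I := .congr e
  rw [invertibleModuleClass, MulEquiv.symm_apply_eq, equivPic_mk0 ⟨I, hI⟩]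
  exact CommRing.Pic.mk_eq_mk_iff.mpr ⟨e⟩

end InvertibleModuleClass

section SurjectionOntoInvertible

variable {R N P I : Type*} [CommRing R] [IsDedekindDomain R] [AddCommGroup N] [Module R N]
  [AddCommGroup P] [Module R P] [AddCommGroup I] [Module R I]

lemma exists_surjective_prod_self_ideal [Module.Projective R N] [Nontrivial N] {J : Ideal R}
    (hJ : J ≠ ⊥) : ∃ φ : N × R →ₗ[R] J, Function.Surjective φ := by
  obtain ⟨n, hn⟩ := exists_ne (0 : N)
  obtain ⟨f, hf⟩ := Module.Projective.exists_dual_ne_zero R hn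
  obtain ⟨b, hb, hb₀⟩ := Submodule.exists_mem_ne_zero_of_ne_bot hJ
  let g : N →ₗ[R] R := b • f
  have hg : g.range ≤ J := by
    rintro - ⟨m, rfl⟩
    exact J.mul_mem_right _ hb
  have hg₀ : g.range ≠ ⊥ := fun h ↦
    mul_ne_zero hb₀ hf (LinearMap.congr_fun (LinearMap.range_eq_bot.mp h) n)
  obtain ⟨a, ha⟩ := IsDedekindDomain.exists_sup_span_eq hg hg₀
  let φ : N × R →ₗ[R] R := g.coprod (.toSpanSingleton R R a)
  have hφ : φ.range = J := by
    rw [LinearMap.range_coprod, LinearMap.range_toSpanSingleton]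
    exact ha
  exact ⟨φ.codRestrict J fun x ↦ hφ ▸ ⟨x, rfl⟩, LinearMap.range_eq_top.mp
    (by rw [LinearMap.range_codRestrict, hφ, Submodule.comap_subtype_self])⟩

variable (N P I) in
theorem exists_surjective_prod_of_invertible [Module.Invertible R N] [Module.Invertible R P]
    [Module.Invertible R I] : ∃ φ : N × P →ₗ[R] I, Function.Surjective φ := by
  obtain ⟨J, ⟨e⟩⟩ := Module.Invertible.exists_linearEquiv_ideal R (I ⊗[R] Module.Dual R P)
  have : Nontrivial (I ⊗[R] Module.Dual R P) := nontrivial_of_invertible R _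
  have : Nontrivial (N ⊗[R] Module.Dual R P) := nontrivial_of_invertible R _
  obtain ⟨φ, hφ⟩ := exists_surjective_prod_self_ideal (N := N ⊗[R] Module.Dual R P)
    (Submodule.nontrivial_iff_ne_bot.mp e.symm.nontrivial)
  let ψ : (N ⊗[R] Module.Dual R P) × R →ₗ[R] I ⊗[R] Module.Dual R P := e.symm ∘ₗ φ
  have hψ : Function.Surjective ψ := e.symm.surjective.comp hφ
  let c := Module.Invertible.linearEquiv R P
  let source : (N × P) ≃ₗ[R] ((N ⊗[R] Module.Dual R P) × R) ⊗[R] P :=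
    (Module.Invertible.rightCancelEquiv N c).symm.prodCongr (TensorProduct.lid R P).symm ≪≫ₗ
      (TensorProduct.prodLeft R R _ R P).symm
  let target : (I ⊗[R] Module.Dual R P) ⊗[R] P ≃ₗ[R] I := Module.Invertible.rightCancelEquiv I c
  exact ⟨target.toLinearMap ∘ₗ ψ.rTensor P ∘ₗ source.toLinearMap,
    target.surjective.comp ((LinearMap.rTensor_surjective P hψ).comp source.surjective)⟩

end SurjectionOntoInvertible

section LatticeInter

open scoped nonZeroDivisors

variable {R K L : Type*} [CommRing R] [Field K] [Algebra R K] [AddCommGroup L] [Module R L]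

/-- The intersection `L ∩ W` of a module with a subspace `W` of its base change `K ⊗ L`, encoded as
the preimage of `W` under `x ↦ 1 ⊗ x`. -/
def latticeInter (W : Submodule K (K ⊗[R] L)) : Submodule R L :=
  (W.restrictScalars R).comap (TensorProduct.mk R K L 1)

lemma mem_latticeInter {W : Submodule K (K ⊗[R] L)} {x : L} :
    x ∈ latticeInter W ↔ (1 : K) ⊗ₜ[R] x ∈ W := Iff.rfl

lemma latticeInter_map (W : Submodule K (K ⊗[R] L)) (g : L ≃ₗ[R] L) :
    latticeInter (W.map ((g : L →ₗ[R] L).baseChange K)) =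
      (latticeInter W).map (g : L →ₗ[R] L) := by
  ext x
  rw [Submodule.mem_map_equiv, mem_latticeInter, mem_latticeInter]
  exact Submodule.mem_map_equiv (e := g.baseChange R K L L) ..

lemma latticeInter_baseChange_range [FaithfulSMul R K] [Module.Flat R L] {I : Type*}
    [AddCommGroup I] [Module R I] {s : I →ₗ[R] L} {π : L →ₗ[R] I} (h : π ∘ₗ s = .id) :
    latticeInter (s.range.baseChange K) = s.range := by
  refine le_antisymm (fun x hx ↦ ⟨π x, ?_⟩)
    fun x hx ↦ Submodule.tmul_mem_baseChange_of_mem 1 hx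
  have hfix : s.range.baseChange K ≤ LinearMap.eqLocus ((s ∘ₗ π).baseChange K) .id := by
    rw [Submodule.baseChange_eq_span, Submodule.span_le]
    rintro - ⟨-, ⟨i, rfl⟩, rfl⟩
    have hi : s (π (s i)) = s i := congr(s $(LinearMap.congr_fun h i))
    simp [hi]
  exact Module.Flat.tensorProduct_mk_injective (R := R) L K (hfix hx)

variable [IsFractionRing R K]

lemma baseChange_latticeInter (W : Submodule K (K ⊗[R] L)) :
    (latticeInter W).baseChange K = W := by
  rw [Submodule.baseChange_eq_span, Submodule.map_coe,
    ← Submodule.localized'_eq_span K R⁰ (TensorProduct.mk R K L 1)]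
  exact (Submodule.localized'gi K R⁰ (TensorProduct.mk R K L 1)).l_u_eq W

lemma latticeInter_map_eq_iff (W W' : Submodule K (K ⊗[R] L)) (g : L ≃ₗ[R] L) :
    (latticeInter W).map (g : L →ₗ[R] L) = latticeInter W' ↔
      W.map ((g : L →ₗ[R] L).baseChange K) = W' := by
  rw [← latticeInter_map]
  exact (Function.LeftInverse.injective baseChange_latticeInter).eq_iff

lemma finrank_latticeInter (W : Submodule K (K ⊗[R] L)) :
    Module.finrank R (latticeInter W) = Module.finrank K W := by
  have : IsDomain R := (FaithfulSMul.algebraMap_injective R K).isDomain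
  have : Module.Flat R K := IsLocalization.flat K R⁰
  rw [← congr((Module.finrank K ↥$(baseChange_latticeInter W))),
    ← (Submodule.toBaseChange.toLinearEquiv K _).finrank_eq,
    (TensorProduct.isBaseChange R _ K).finrank_eq]

instance isTorsionFree_quotient_latticeInter (W : Submodule K (K ⊗[R] L)) :
    Module.IsTorsionFree R (L ⧸ latticeInter W) := by
  have : Nontrivial R := (algebraMap R K).domain_nontrivial
  have : Module.IsTorsionFree R ((K ⊗[R] L) ⧸ W) := .trans_faithfulSMul R K _
  let f : L →ₗ[R] (K ⊗[R] L) ⧸ W := W.mkQ.restrictScalars R ∘ₗ TensorProduct.mk R K L 1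
  have hf : latticeInter W = f.ker := by
    ext x
    simp [f, mem_latticeInter]
  exact (LinearMap.ker_eq_bot.mp (Submodule.ker_liftQ_eq_bot' _ f hf)).moduleIsTorsionFree _
    (by simp)

variable (K) in
lemma exists_line_latticeInter_equiv_of_surjective [Module.Flat R L] {I : Type*} [AddCommGroup I]
    [Module R I] [Module.Invertible R I] {π : L →ₗ[R] I} (hπ : Function.Surjective π) :
    ∃ ℓ : {W : Submodule K (K ⊗[R] L) // Module.finrank K W = 1},
      Nonempty (latticeInter ℓ.1 ≃ₗ[R] I) := by
  obtain ⟨s, hs⟩ := Module.projective_lifting_property π .id hπ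
  let e : I ≃ₗ[R] s.range :=
    .ofInjective s (Function.LeftInverse.injective (LinearMap.congr_fun hs))
  have : Module.Invertible R s.range := .congr e
  have hrange : latticeInter (s.range.baseChange K) = s.range := latticeInter_baseChange_range hs
  refine ⟨⟨s.range.baseChange K, ?_⟩, ⟨.ofEq _ _ hrange ≪≫ₗ e.symm⟩⟩
  rw [← finrank_latticeInter, hrange, ← (TensorProduct.isBaseChange R s.range K).finrank_eq]
  exact Module.Invertible.finrank_eq_one K _

end LatticeInter

section Lines

variable {R K L : Type*} [CommRing R] [IsDedekindDomain R] [Field K] [Algebra R K]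
  [IsFractionRing R K] [AddCommGroup L] [Module R L] [Module.Finite R L]

lemma invertible_quotient_latticeInter (hL : Module.finrank R L = 2)
    (ℓ : {W : Submodule K (K ⊗[R] L) // Module.finrank K W = 1}) :
    Module.Invertible R (L ⧸ latticeInter ℓ.1) := by
  refine invertible_of_finrank_eq_one ?_
  have h := (latticeInter ℓ.1).finrank_quotient_add_finrank
  rw [finrank_latticeInter, ℓ.2, hL] at h
  omega

variable [Module.Projective R L]

instance invertible_latticeInter
    (ℓ : {W : Submodule K (K ⊗[R] L) // Module.finrank K W = 1}) :
    Module.Invertible R (latticeInter ℓ.1) :=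
  invertible_of_finrank_eq_one ((finrank_latticeInter ℓ.1).trans ℓ.2)

variable (K) in
theorem exists_line_latticeInter_equiv (hL : Module.finrank R L = 2) (I : Type*) [AddCommGroup I]
    [Module R I] [Module.Invertible R I] :
    ∃ ℓ : {W : Submodule K (K ⊗[R] L) // Module.finrank K W = 1},
      Nonempty (latticeInter ℓ.1 ≃ₗ[R] I) := by
  have hV : Module.finrank K (K ⊗[R] L) = 2 := by
    rw [(TensorProduct.isBaseChange R L K).finrank_eq, hL]
  have : Nontrivial (K ⊗[R] L) := Module.nontrivial_of_finrank_pos (R := K) (by omega)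
  obtain ⟨v, hv⟩ := exists_ne (0 : K ⊗[R] L)
  obtain ⟨ℓ⟩ : Nonempty {W : Submodule K (K ⊗[R] L) // Module.finrank K W = 1} :=
    ⟨⟨K ∙ v, finrank_span_singleton hv⟩⟩
  have := invertible_quotient_latticeInter hL ℓ
  obtain ⟨e, -⟩ := exists_linearEquiv_prod_quotient (latticeInter ℓ.1)
  obtain ⟨φ, hφ⟩ :=
    exists_surjective_prod_of_invertible (R := R) (latticeInter ℓ.1) (L ⧸ latticeInter ℓ.1) I
  exact exists_line_latticeInter_equiv_of_surjective K (π := φ ∘ₗ e.toLinearMap)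
    (hφ.comp e.surjective)

theorem nonempty_latticeInter_equiv_iff (hL : Module.finrank R L = 2)
    (ℓ ℓ' : {W : Submodule K (K ⊗[R] L) // Module.finrank K W = 1}) :
    Nonempty (latticeInter ℓ.1 ≃ₗ[R] latticeInter ℓ'.1) ↔
      ∃ g : L ≃ₗ[R] L, ((g : L →ₗ[R] L).baseChange K).det = 1 ∧
        ℓ.1.map ((g : L →ₗ[R] L).baseChange K) = ℓ'.1 := by
  have := invertible_quotient_latticeInter hL ℓ
  have := invertible_quotient_latticeInter hL ℓ'
  simp only [← latticeInter_map_eq_iff]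
  constructor
  · rintro ⟨e⟩
    exact exists_linearEquiv_det_baseChange_eq_one_and_map_eq K e
  · rintro ⟨g, -, hg⟩
    exact ⟨g.submoduleMap _ ≪≫ₗ .ofEq _ _ hg⟩

end Lines

theorem statement19_general (R K L : Type*) [CommRing R] [IsDedekindDomain R] [Field K]
    [Algebra R K] [IsFractionRing R K] [AddCommGroup L] [Module R L] [Module.Finite R L]
    [Module.Projective R L] (hrank : Module.finrank R L = 2) :
    ∃ f : {ℓ : Submodule K (K ⊗[R] L) // Module.finrank K ℓ = 1} → ClassGroup R,
      Function.Surjective f ∧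
      (∀ ℓ ℓ', f ℓ = f ℓ' ↔
        ∃ g : L ≃ₗ[R] L,
          LinearMap.det (LinearMap.baseChange K (g : L →ₗ[R] L)) = 1 ∧
          Submodule.map (LinearMap.baseChange K (g : L →ₗ[R] L)) ℓ.1 = ℓ'.1) ∧
      (∀ ℓ (I : Ideal R) (hI : I ≠ 0),
        Nonempty ((Submodule.comap (TensorProduct.mk R K L 1)
          (Submodule.restrictScalars R ℓ.1)) ≃ₗ[R] I) →
        f ℓ = ClassGroup.mk0 ⟨I, mem_nonZeroDivisors_of_ne_zero hI⟩) := by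
  refine ⟨fun ℓ ↦ invertibleModuleClass R (latticeInter ℓ.1), fun c ↦ ?_, fun ℓ ℓ' ↦ ?_,
    fun ℓ I hI ⟨e⟩ ↦ invertibleModuleClass_eq_mk0 _ e⟩
  · obtain ⟨ℓ, hℓ⟩ := exists_line_latticeInter_equiv K hrank (ClassGroup.equivPic R c)
    exact ⟨ℓ, (invertibleModuleClass_eq_iff.mpr hℓ).trans (invertibleModuleClass_equivPic c)⟩
  · exact invertibleModuleClass_eq_iff.trans (nonempty_latticeInter_equiv_iff hrank _ _)

/-- Lemma `ambient-cusps-maximal-order`.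
Let `L` be a finitely generated projective `𝓞_K`-module of constant rank two and
let `𝒢 = SL(L)` act on the `K`-lines of `L ⊗ K`.  The map `ℓ ↦ [L ∩ ℓ]` induces a
bijection between the set of `𝒢`-orbits of `K`-lines and the ideal class group:
there is a map `f` from lines to `ClassGroup 𝓞_K` which is surjective, whose
fibers are exactly the `𝒢`-orbits, and which sends `ℓ` to the class of any
nonzero ideal isomorphic to `L ∩ ℓ`.  In particular the number of orbits equals
the class number `h_K`. -/
theorem statement19 (K : Type*) [Field K] [NumberField K]
    (L : Type*) [AddCommGroup L] [Module (NumberField.RingOfIntegers K) L]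
    [Module.Finite (NumberField.RingOfIntegers K) L]
    [Module.Projective (NumberField.RingOfIntegers K) L]
    (hrank : Module.finrank (NumberField.RingOfIntegers K) L = 2) :
    ∃ f : {ℓ : Submodule K (K ⊗[NumberField.RingOfIntegers K] L) //
            Module.finrank K ℓ = 1} → ClassGroup (NumberField.RingOfIntegers K),
      Function.Surjective f ∧
      (∀ ℓ ℓ', f ℓ = f ℓ' ↔
        ∃ g : L ≃ₗ[NumberField.RingOfIntegers K] L,
          LinearMap.det
            (LinearMap.baseChange K (g : L →ₗ[NumberField.RingOfIntegers K] L)) = 1 ∧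
          Submodule.map
            (LinearMap.baseChange K (g : L →ₗ[NumberField.RingOfIntegers K] L)) ℓ.1
            = ℓ'.1) ∧
      (∀ ℓ (I : Ideal (NumberField.RingOfIntegers K)) (hI : I ≠ 0),
        Nonempty
          ((Submodule.comap ((TensorProduct.mk (NumberField.RingOfIntegers K) K L) 1)
              (Submodule.restrictScalars (NumberField.RingOfIntegers K) ℓ.1))
            ≃ₗ[NumberField.RingOfIntegers K] I) →
        f ℓ = ClassGroup.mk0 ⟨I, mem_nonZeroDivisors_of_ne_zero hI⟩) := by
  exact statement19_general (NumberField.RingOfIntegers K) K L hrank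
end
end
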